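/- Stationarity forces orthogonality to the potential-difference gradient (Lemma H.5(i) / Proposition cond_stationary(i)). Let b be an admissible vector field with global flow X and Jacobian factor J, and let U0, U1 : ℝ^d → ℝ be continuously differentiable. Let D ⊆ ℝ^d be open, and assume that for every x ∈ D: the integrals ∫_0^∞ F^0_t(x) dt, ∫_0^∞ F^1_t(x) dt, ∫_ℝ F^0_t(x) dt, ∫_ℝ F^1_t(x) dt are all finite, ∫_0^∞ F^0_t(x) dt > 0 and ∫_ℝ F^0_t(x) dt > 0, and the stationarity condition holds: (∫_0^∞ F^1_t(x) dt) / (∫_0^∞ F^0_t(x) dt) = A(x). Then for every x ∈ D, ⟨∇(U1 − U0)(x), b(x)⟩ = 0. -/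

import Mathlib

/-!
Fix `x ∈ D` and write `f k t = exp (-U_k (X t x)) * J t x`. The cocycle identity
`J (t + s) x = J s x * J t (X s x)` shows that the integrands based at `X s x` are the translates
`f k (t + s)`, up to the common factor `(J s x)⁻¹`, which cancels in every quotient
(`weight_flow`, `integral_weight_flow`, `integral_Ioi_weight_flow`). Hence `A` is constant along the
orbit, and stationarity at `X s x`, which lies in `D` for `s` near `0`, reads
`∫ t > s, f 1 t = A(x) * ∫ t > s, f 0 t`. Differentiating in `s` gives `f 1 s = A(x) * f 0 s` for
`s` near `0` (`eventually_eq_mul_of_ratio_tail`). Therefore `exp (-(U1 - U0) (X s x)) = A(x)` near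
`s = 0`, so `U1 - U0` is locally constant along the orbit, and its derivative at `s = 0`, which is
`⟨∇(U1 - U0)(x), b x⟩`, vanishes.
-/

open MeasureTheory Filter

noncomputable section

/-- Euclidean state space ℝ^d. -/
abbrev Euc (d : ℕ) := EuclideanSpace ℝ (Fin d)

/-- Divergence of a vector field: trace of the Fréchet derivative. -/
def vdiv {d : ℕ} (b : Euc d → Euc d) (x : Euc d) : ℝ :=
  LinearMap.trace ℝ (Euc d) (fderiv ℝ b x).toLinearMap

/-- A vector field is admissible if it is C¹ with globally bounded derivative. -/
def Admissible {d : ℕ} (b : Euc d → Euc d) : Prop :=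
  ContDiff ℝ 1 b ∧ ∃ C : ℝ, ∀ x, ‖fderiv ℝ b x‖ ≤ C

/-- A global flow of the vector field `b`. -/
def IsGlobalFlow {d : ℕ} (b : Euc d → Euc d) (X : ℝ → Euc d → Euc d) : Prop :=
  (∀ x, X 0 x = x) ∧
  (∀ t s : ℝ, ∀ x, X (t + s) x = X t (X s x)) ∧
  (∀ x : Euc d, ∀ t : ℝ, HasDerivAt (fun τ => X τ x) (b (X t x)) t)

/-- Jacobian factor of the flow: J t x = exp(∫₀ᵗ div b(X s x) ds). -/
def Jac {d : ℕ} (b : Euc d → Euc d) (X : ℝ → Euc d → Euc d) (t : ℝ) (x : Euc d) : ℝ :=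
  Real.exp (∫ s in (0:ℝ)..t, vdiv b (X s x))

/-- The integrand `F_t(x) = exp (-U (X t x)) * J t x` attached to a potential `U`. -/
def weight {d : ℕ} (b : Euc d → Euc d) (X : ℝ → Euc d → Euc d) (U : Euc d → ℝ) (x : Euc d)
    (t : ℝ) : ℝ :=
  Real.exp (-(U (X t x))) * Jac b X t x

lemma continuous_vdiv {d : ℕ} {b : Euc d → Euc d} (hb : ContDiff ℝ 1 b) :
    Continuous (vdiv b) := by
  have h1 : Continuous (fderiv ℝ b) := hb.continuous_fderiv one_ne_zero
  let T : (Euc d →L[ℝ] Euc d) →ₗ[ℝ] ℝ :=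
    (LinearMap.trace ℝ (Euc d)).comp (ContinuousLinearMap.coeLM ℝ)
  exact T.continuous_of_finiteDimensional.comp h1

lemma continuous_flow {d : ℕ} {b : Euc d → Euc d} {X : ℝ → Euc d → Euc d}
    (hX : IsGlobalFlow b X) (x : Euc d) : Continuous (fun t => X t x) :=
  continuous_iff_continuousAt.2 fun t => (hX.2.2 x t).continuousAt

lemma continuous_weight {d : ℕ} {b : Euc d → Euc d} {X : ℝ → Euc d → Euc d}
    (hb : ContDiff ℝ 1 b) (hX : IsGlobalFlow b X) {U : Euc d → ℝ} (hU : Continuous U)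
    (x : Euc d) : Continuous (weight b X U x) := by
  have hg : Continuous fun s => vdiv b (X s x) := (continuous_vdiv hb).comp (continuous_flow hX x)
  have hJ : Continuous fun t : ℝ => ∫ s in (0 : ℝ)..t, vdiv b (X s x) :=
    intervalIntegral.continuous_primitive (fun _ _ => hg.intervalIntegrable _ _) 0
  exact (Real.continuous_exp.comp (hU.comp (continuous_flow hX x)).neg).mul
    (Real.continuous_exp.comp hJ)

lemma jac_pos {d : ℕ} (b : Euc d → Euc d) (X : ℝ → Euc d → Euc d) (t : ℝ) (x : Euc d) :
    0 < Jac b X t x :=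
  Real.exp_pos _

/-- The cocycle identity for the Jacobian factor. -/
lemma jac_add {d : ℕ} {b : Euc d → Euc d} {X : ℝ → Euc d → Euc d}
    (hb : ContDiff ℝ 1 b) (hX : IsGlobalFlow b X) (s t : ℝ) (x : Euc d) :
    Jac b X (t + s) x = Jac b X s x * Jac b X t (X s x) := by
  have hg : Continuous fun r => vdiv b (X r x) := (continuous_vdiv hb).comp (continuous_flow hX x)
  have h1 : ∫ r in (0 : ℝ)..t, vdiv b (X r (X s x)) = ∫ r in s..(t + s), vdiv b (X r x) := by
    simp_rw [← hX.2.1]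
    simpa using intervalIntegral.integral_comp_add_right (a := 0) (b := t)
      (fun r => vdiv b (X r x)) s
  rw [Jac, Jac, Jac, ← Real.exp_add, h1, intervalIntegral.integral_add_adjacent_intervals
    (hg.intervalIntegrable _ _) (hg.intervalIntegrable _ _)]

lemma weight_flow {d : ℕ} {b : Euc d → Euc d} {X : ℝ → Euc d → Euc d}
    (hb : ContDiff ℝ 1 b) (hX : IsGlobalFlow b X) (U : Euc d → ℝ) (s t : ℝ) (x : Euc d) :
    weight b X U (X s x) t = (Jac b X s x)⁻¹ * weight b X U x (t + s) := by
  have h := (jac_pos b X s x).ne'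
  rw [weight, weight, jac_add hb hX, hX.2.1]
  field_simp

lemma integral_weight_flow {d : ℕ} {b : Euc d → Euc d} {X : ℝ → Euc d → Euc d}
    (hb : ContDiff ℝ 1 b) (hX : IsGlobalFlow b X) (U : Euc d → ℝ) (s : ℝ) (x : Euc d) :
    ∫ t, weight b X U (X s x) t = (Jac b X s x)⁻¹ * ∫ t, weight b X U x t := by
  simp_rw [weight_flow hb hX]
  rw [integral_const_mul, integral_add_right_eq_self (weight b X U x) s]

lemma integral_Ioi_weight_flow {d : ℕ} {b : Euc d → Euc d} {X : ℝ → Euc d → Euc d}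
    (hb : ContDiff ℝ 1 b) (hX : IsGlobalFlow b X) (U : Euc d → ℝ) (s : ℝ) (x : Euc d) :
    ∫ t in Set.Ioi (0 : ℝ), weight b X U (X s x) t =
      (Jac b X s x)⁻¹ * ∫ t in Set.Ioi s, weight b X U x t := by
  have h := (measurePreserving_add_right (volume : Measure ℝ) s).setIntegral_preimage_emb
    (measurableEmbedding_addRight s) (weight b X U x) (Set.Ioi s)
  rw [Set.preimage_add_const_Ioi, sub_self] at h
  simp_rw [weight_flow hb hX]
  rw [integral_const_mul, h]

/-- If the tail integrals of `f1` and `f0` have a constant ratio `a` near `0`, then so do the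
functions themselves, by differentiating the tails. -/
lemma eventually_eq_mul_of_ratio_tail {f0 f1 : ℝ → ℝ} {a : ℝ}
    (c0 : Continuous f0) (c1 : Continuous f1) (i0 : Integrable f0) (i1 : Integrable f1)
    (h : ∀ᶠ s in nhds (0 : ℝ), ∫ t in Set.Ioi s, f1 t = a * ∫ t in Set.Ioi s, f0 t) :
    ∀ᶠ s in nhds (0 : ℝ), f1 s = a * f0 s := by
  have hc : Continuous fun t => f1 t - a * f0 t := c1.sub (continuous_const.mul c0)
  have hi : Integrable fun t => f1 t - a * f0 t := i1.sub (i0.const_mul a)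
  have tail : ∀ s : ℝ, (∫ t in Set.Ioi s, f1 t = a * ∫ t in Set.Ioi s, f0 t) →
      ∫ t in Set.Ioi s, (f1 t - a * f0 t) = 0 := fun s hs => by
    rw [integral_sub i1.integrableOn (i0.const_mul a).integrableOn, integral_const_mul, hs,
      sub_self]
  have key : ∀ᶠ s in nhds (0 : ℝ), ∫ t in (0 : ℝ)..s, (f1 t - a * f0 t) = 0 := by
    filter_upwards [h] with s hs
    have := intervalIntegral.integral_interval_add_Ioi (a := 0) (b := s)
      hi.integrableOn hi.integrableOn
    rwa [tail s hs, tail 0 h.self_of_nhds, add_zero] at this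
  filter_upwards [eventually_eventually_nhds.2 key] with s hs
  have h1 := (hc.integral_hasStrictDerivAt 0 s).hasDerivAt
  have h2 : HasDerivAt (fun u => ∫ t in (0 : ℝ)..u, (f1 t - a * f0 t)) 0 s :=
    (hasDerivAt_const s (0 : ℝ)).congr_of_eventuallyEq hs
  linarith [h1.unique h2]

/-- Stationarity forces orthogonality to the potential-difference gradient
(Lemma H.5(i) / Proposition cond_stationary(i)). -/
theorem stmt_17 {d : ℕ} (hd : 0 < d)
    (b : Euc d → Euc d) (hb : Admissible b)
    (X : ℝ → Euc d → Euc d) (hX : IsGlobalFlow b X)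
    (U0 U1 : Euc d → ℝ) (hU0 : ContDiff ℝ 1 U0) (hU1 : ContDiff ℝ 1 U1)
    (D : Set (Euc d)) (hD : IsOpen D)
    (hhyp : ∀ x ∈ D,
      IntegrableOn (fun t : ℝ => Real.exp (-(U0 (X t x))) * Jac b X t x) (Set.Ioi 0) ∧
      IntegrableOn (fun t : ℝ => Real.exp (-(U1 (X t x))) * Jac b X t x) (Set.Ioi 0) ∧
      Integrable (fun t : ℝ => Real.exp (-(U0 (X t x))) * Jac b X t x) ∧
      Integrable (fun t : ℝ => Real.exp (-(U1 (X t x))) * Jac b X t x) ∧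
      0 < (∫ t in Set.Ioi (0:ℝ), Real.exp (-(U0 (X t x))) * Jac b X t x) ∧
      0 < (∫ t : ℝ, Real.exp (-(U0 (X t x))) * Jac b X t x) ∧
      (∫ t in Set.Ioi (0:ℝ), Real.exp (-(U1 (X t x))) * Jac b X t x) /
          (∫ t in Set.Ioi (0:ℝ), Real.exp (-(U0 (X t x))) * Jac b X t x) =
        (∫ t : ℝ, Real.exp (-(U1 (X t x))) * Jac b X t x) /
          (∫ t : ℝ, Real.exp (-(U0 (X t x))) * Jac b X t x)) :
    ∀ x ∈ D, @inner ℝ _ _ (gradient (fun y => U1 y - U0 y) x) (b x) = (0 : ℝ) := by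
  intro x hx
  have hb1 := hb.1
  obtain ⟨-, -, i0, i1, -, -, -⟩ := hhyp x hx
  set a : ℝ := (∫ t, weight b X U1 x t) / ∫ t, weight b X U0 x t with ha
  have hmem : ∀ᶠ s in nhds (0 : ℝ), X s x ∈ D :=
    (continuous_flow hX x).continuousAt.eventually_mem (hD.mem_nhds (by rwa [hX.1]))
  have hev : ∀ᶠ s in nhds (0 : ℝ), weight b X U1 x s = a * weight b X U0 x s := by
    refine eventually_eq_mul_of_ratio_tail (continuous_weight hb1 hX hU0.continuous x)
      (continuous_weight hb1 hX hU1.continuous x) i0 i1 ?_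
    filter_upwards [hmem] with s hs
    obtain ⟨-, -, -, -, hpos, -, hst⟩ := hhyp (X s x) hs
    have hJ : (Jac b X s x)⁻¹ ≠ 0 := inv_ne_zero (jac_pos b X s x).ne'
    change 0 < ∫ t in Set.Ioi (0 : ℝ), weight b X U0 (X s x) t at hpos
    change (∫ t in Set.Ioi (0 : ℝ), weight b X U1 (X s x) t) /
        (∫ t in Set.Ioi (0 : ℝ), weight b X U0 (X s x) t) =
      (∫ t, weight b X U1 (X s x) t) / (∫ t, weight b X U0 (X s x) t) at hst
    rw [integral_Ioi_weight_flow hb1 hX] at hpos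
    rw [integral_Ioi_weight_flow hb1 hX, integral_Ioi_weight_flow hb1 hX,
      integral_weight_flow hb1 hX, integral_weight_flow hb1 hX, mul_div_mul_left _ _ hJ,
      mul_div_mul_left _ _ hJ, ← ha] at hst
    exact (div_eq_iff (right_ne_zero_of_mul hpos.ne')).1 hst
  have hconst : ∀ᶠ s in nhds (0 : ℝ), U1 (X s x) - U0 (X s x) = -Real.log a := by
    filter_upwards [hev] with s hs
    rw [weight, weight, ← mul_assoc] at hs
    have h1 := mul_right_cancel₀ (jac_pos b X s x).ne' hs
    have h2 : a = Real.exp (U0 (X s x) - U1 (X s x)) := by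
      rw [← div_eq_iff (Real.exp_pos _).ne', ← Real.exp_sub] at h1
      rw [← h1]
      ring_nf
    rw [h2, Real.log_exp]
    ring
  have hdiff : DifferentiableAt ℝ (fun y => U1 y - U0 y) (X 0 x) :=
    ((hU1.sub hU0).differentiable one_ne_zero).differentiableAt
  have h1 := hdiff.hasFDerivAt.comp_hasDerivAt (0 : ℝ) (hX.2.2 x 0)
  have h2 : HasDerivAt ((fun y => U1 y - U0 y) ∘ fun s => X s x) 0 (0 : ℝ) :=
    (hasDerivAt_const (0 : ℝ) (-Real.log a)).congr_of_eventuallyEq hconst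
  have h3 := h1.unique h2
  rw [hX.1] at h3
  rw [inner_gradient_left]
  exact h3
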